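/- arXiv:hep-th/0403232 — 2 statements merged into one kernel-verified Lean document; each statement's English description precedes it below -/
import Mathlib

section
/- For every θ > 0, the Gaussian f₀₀(x₁,x₂) := 2 e^{−(x₁²+x₂²)/θ} is an idempotent for the two-dimensional Moyal star product: (f₀₀ ⋆ f₀₀)(x) = f₀₀(x) for all x ∈ ℝ². -/
/-!
Both integrals defining `f₀₀ ⋆ f₀₀` are Gaussian integrals over `ℝ²` with isotropic quadratic part,
so each is evaluated by completing the square (`integral_gaussian_plane`). The `y`-integral gives
`4πθ · exp(-|x|²/θ - (θ/2)|k|² + (x₂ - i x₁) k₁ + (-x₁ - i x₂) k₂)`. The two linear coefficients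
satisfy `(x₂ - i x₁)² + (-x₁ - i x₂)² = 0`, so completing the square in `k` produces no further
dependence on `x`: the `k`-integral only contributes the factor `2π/θ`, and
`4πθ · (2π/θ) / (2π)² = 2`.
-/

open MeasureTheory

/-- The two-dimensional Moyal star product:
`(a ⋆ b)(x) = (1/(2π)²) ∫ dk ∫ dy a(x₁+½θk₂, x₂−½θk₁) b(x+y) e^{ik·y}`. -/
noncomputable def moyal (θ : ℝ) (a b : ℝ × ℝ → ℂ) (x : ℝ × ℝ) : ℂ :=
  (1 / (2 * Real.pi) ^ 2 : ℝ) •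
    ∫ k : ℝ × ℝ, ∫ y : ℝ × ℝ,
      a (x.1 + θ / 2 * k.2, x.2 - θ / 2 * k.1) * b (x.1 + y.1, x.2 + y.2) *
        Complex.exp (Complex.I * ((k.1 * y.1 + k.2 * y.2 : ℝ) : ℂ))

/-- The Gaussian ground state `f₀₀(x₁,x₂) = 2 e^{−(x₁²+x₂²)/θ}` of the matrix base. -/
noncomputable def f00 (θ : ℝ) (x : ℝ × ℝ) : ℂ :=
  2 * Complex.exp (-(((x.1 ^ 2 + x.2 ^ 2) / θ : ℝ) : ℂ))

/-- The Gaussian integral over `ℝ²` with quadratic part `b (v₁² + v₂²)`, `b < 0`, and complex linear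
and constant terms. -/
lemma integral_gaussian_plane (b : ℝ) (hb : b < 0) (c₁ c₂ d : ℂ) :
    ∫ v : ℝ × ℝ, Complex.exp ((b * v.1 ^ 2 + c₁ * v.1 + d) + (b * v.2 ^ 2 + c₂ * v.2 + 0)) =
      (Real.pi / -b) * Complex.exp (d - (c₁ ^ 2 + c₂ ^ 2) / (4 * b)) := by
  have hb' : ((b : ℂ)).re < 0 := by simpa using hb
  have hne : (Real.pi / -b : ℂ) ≠ 0 := by
    have : (b : ℂ) ≠ 0 := by exact_mod_cast hb.ne
    have : (Real.pi : ℂ) ≠ 0 := by exact_mod_cast Real.pi_ne_zero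
    simp_all
  have hsq : (Real.pi / -b : ℂ) ^ (1 / 2 : ℂ) * (Real.pi / -b : ℂ) ^ (1 / 2 : ℂ) =
      Real.pi / -b := by
    rw [← Complex.cpow_add _ _ hne]
    norm_num
  simp_rw [Complex.exp_add (_ + _ + d)]
  rw [Measure.volume_eq_prod, integral_prod_mul
    (fun s : ℝ => Complex.exp (b * s ^ 2 + c₁ * s + d))
    (fun t : ℝ => Complex.exp (b * t ^ 2 + c₂ * t + 0)),
    integral_cexp_quadratic hb', integral_cexp_quadratic hb', mul_mul_mul_comm, hsq,
    ← Complex.exp_add]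
  ring_nf

/-- For every `θ > 0`, the Gaussian `f₀₀` is an idempotent for the two-dimensional Moyal
star product: `(f₀₀ ⋆ f₀₀)(x) = f₀₀(x)` for all `x ∈ ℝ²`. -/
theorem f00_star_idempotent (θ : ℝ) (hθ : 0 < θ) (x : ℝ × ℝ) :
    moyal θ (f00 θ) (f00 θ) x = f00 θ x := by
  obtain ⟨x₁, x₂⟩ := x
  have hθ' : (θ : ℂ) ≠ 0 := by exact_mod_cast hθ.ne'
  have hπ : (Real.pi : ℂ) ≠ 0 := by exact_mod_cast Real.pi_ne_zero
  have inner (k : ℝ × ℝ) : (∫ y : ℝ × ℝ,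
      f00 θ (x₁ + θ / 2 * k.2, x₂ - θ / 2 * k.1) * f00 θ (x₁ + y.1, x₂ + y.2) *
        Complex.exp (Complex.I * ((k.1 * y.1 + k.2 * y.2 : ℝ) : ℂ))) =
      4 * (Real.pi * θ) * Complex.exp
        ((((-(θ / 2) : ℝ) : ℂ) * k.1 ^ 2 + (x₂ - Complex.I * x₁) * k.1
            + (-((x₁ ^ 2 + x₂ ^ 2) / θ : ℂ)))
          + (((-(θ / 2) : ℝ) : ℂ) * k.2 ^ 2 + (-x₁ - Complex.I * x₂) * k.2 + 0)) := by
    have h := integral_gaussian_plane (-θ⁻¹) (by simpa using hθ)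
      (-2 * x₁ / θ + Complex.I * k.1) (-2 * x₂ / θ + Complex.I * k.2)
      (-(x₁ ^ 2 + x₂ ^ 2) / θ
        - ((x₁ + θ / 2 * k.2) ^ 2 + (x₂ - θ / 2 * k.1) ^ 2) / θ)
    have h4 := congrArg (fun z : ℂ => 4 * z) h
    simp only [← integral_const_mul] at h4
    refine Eq.trans (integral_congr_ae (Filter.Eventually.of_forall fun y => ?_)) (h4.trans ?_)
    · simp only [f00]
      rw [mul_mul_mul_comm, ← Complex.exp_add, mul_assoc, ← Complex.exp_add]
      norm_num only
      congr 2
      push_cast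
      field_simp
      ring
    · rw [← mul_assoc]
      congr 2
      · push_cast
        field_simp
      · push_cast
        field_simp
        ring_nf
        simp only [Complex.I_sq]
        ring
  simp only [moyal]
  simp_rw [inner]
  rw [integral_const_mul, integral_gaussian_plane _ (by linarith)]
  -- the linear coefficients in `k` form an isotropic vector
  have iso : (x₂ - Complex.I * x₁ : ℂ) ^ 2 + (-x₁ - Complex.I * x₂) ^ 2 = 0 := by
    ring_nf
    simp only [Complex.I_sq]
    ring
  rw [iso, zero_div, sub_zero, Complex.real_smul]
  simp only [f00]
  push_cast
  field_simp
  ring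
end

section
/- Let D be a positive integer, θ a real antisymmetric D×D matrix, and a, b Schwartz functions on ℝ^D. Then the Moyal star product is tracial: ∫_{ℝ^D} (a ⋆ b)(x) dx = ∫_{ℝ^D} a(x) b(x) dx. -/
/-!
The Moyal product is tracial because the quadratic form `k ↦ k · θ k` of an antisymmetric matrix
vanishes.

Translating the inner integral by `x` gives
`(a ⋆ b)(x) = (2π)⁻ᴰ ∫ dk a(x + ½θk) e^{-i k·x} b̃(k)`, where `b̃(k) = ∫ b(z) e^{i k·z} dz`. Since `b̃`
is integrable and `(k, x) ↦ (k, x + ½θk)` preserves Lebesgue measure, the integrand is absolutely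
integrable in `(k, x)` and Fubini applies. After the `x`-integral is taken inside, the
substitution `x ↦ x - ½θk` produces only the phase `e^{i k·θk/2} = 1`, so the integral does not
depend on `θ`. Taking `θ = 0` and exchanging the integrals back, Fourier inversion
`∫ b̃(k) e^{-i k·x} dk = (2π)ᴰ b(x)` (`integral_moyalFourier_mul_exp`) yields the result.
-/

open MeasureTheory Matrix
open scoped BigOperators

/-- The `D`-dimensional Moyal star product for an antisymmetric real matrix `θ`:
`(a ⋆ b)(x) = (1/(2π)^D) ∫ dk ∫ dy a(x + ½θ·k) b(x+y) e^{ik·y}`. -/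
noncomputable def moyalD (D : ℕ) (θ : Matrix (Fin D) (Fin D) ℝ)
    (a b : (Fin D → ℝ) → ℂ) (x : Fin D → ℝ) : ℂ :=
  (1 / (2 * Real.pi) ^ D : ℝ) •
    ∫ k : Fin D → ℝ, ∫ y : Fin D → ℝ,
      a (x + (1 / 2 : ℝ) • θ.mulVec k) * b (x + y) *
        Complex.exp (Complex.I * ((∑ i, k i * y i : ℝ) : ℂ))

open scoped FourierTransform

/-- The transform `b̃(k) = ∫ b(z) e^{i k·z} dz`, with no normalising factor and no `2π` in the
exponent. -/
noncomputable def moyalFourier {D : ℕ} (b : (Fin D → ℝ) → ℂ) (k : Fin D → ℝ) : ℂ :=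
  ∫ z : Fin D → ℝ, b z * Complex.exp (Complex.I * ((k ⬝ᵥ z : ℝ) : ℂ))

/-- A Schwartz function on `Fin D → ℝ` (sup norm) regarded as one on Euclidean space, where
Mathlib's Fourier transform is available. -/
noncomputable def toEuclideanSchwartz {D : ℕ} (b : SchwartzMap (Fin D → ℝ) ℂ) :
    SchwartzMap (EuclideanSpace ℝ (Fin D)) ℂ :=
  SchwartzMap.compCLMOfContinuousLinearEquiv ℂ (EuclideanSpace.equiv (Fin D) ℝ) b

lemma toEuclideanSchwartz_apply {D : ℕ} (b : SchwartzMap (Fin D → ℝ) ℂ)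
    (v : EuclideanSpace ℝ (Fin D)) : toEuclideanSchwartz b v = b v.ofLp := rfl

lemma integral_comp_ofLp {D : ℕ} (f : (Fin D → ℝ) → ℂ) :
    ∫ v : EuclideanSpace ℝ (Fin D), f v.ofLp = ∫ z, f z :=
  (PiLp.volume_preserving_ofLp (Fin D)).integral_comp
    (MeasurableEquiv.toLp 2 (Fin D → ℝ)).symm.measurableEmbedding f

/-- `b̃` is the inverse Fourier transform of `b` rescaled by `2π`. -/
lemma moyalFourier_eq {D : ℕ} (b : SchwartzMap (Fin D → ℝ) ℂ) (k : Fin D → ℝ) :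
    moyalFourier b k = 𝓕⁻ (toEuclideanSchwartz b) (WithLp.toLp 2 ((2 * Real.pi)⁻¹ • k)) := by
  rw [SchwartzMap.fourierInv_coe, Real.fourierInv_eq', moyalFourier, ← integral_comp_ofLp]
  refine integral_congr_ae (.of_forall fun v => ?_)
  have h : 2 * Real.pi * inner ℝ v (WithLp.toLp 2 ((2 * Real.pi)⁻¹ • k)) = k ⬝ᵥ v.ofLp := by
    rw [EuclideanSpace.inner_eq_star_dotProduct]
    simp only [star_trivial, smul_dotProduct, smul_eq_mul]
    field_simp
  simp only [h, toEuclideanSchwartz_apply, smul_eq_mul]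
  rw [mul_comm, mul_comm Complex.I]

lemma integrable_moyalFourier {D : ℕ} (b : SchwartzMap (Fin D → ℝ) ℂ) :
    Integrable (moyalFourier b) := by
  have h1 : Integrable fun w : Fin D → ℝ => 𝓕⁻ (toEuclideanSchwartz b) (WithLp.toLp 2 w) :=
    (PiLp.volume_preserving_toLp (Fin D)).integrable_comp_of_integrable
      (𝓕⁻ (toEuclideanSchwartz b)).integrable
  have h2 := h1.comp_smul (R := (2 * Real.pi)⁻¹) (by positivity)
  exact h2.congr (.of_forall fun k => (moyalFourier_eq b k).symm)

/-- Fourier inversion in the normalisation of `moyalFourier`. -/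
lemma integral_moyalFourier_mul_exp {D : ℕ} (b : SchwartzMap (Fin D → ℝ) ℂ) (x : Fin D → ℝ) :
    ∫ k, moyalFourier b k * Complex.exp (-(Complex.I * ((k ⬝ᵥ x : ℝ) : ℂ)))
      = ((2 * Real.pi) ^ D : ℝ) • b x := by
  have hpi : (2 * Real.pi) ≠ 0 := by positivity
  have h := Measure.integral_comp_inv_smul_of_nonneg (volume : Measure (Fin D → ℝ))
    (fun w => 𝓕⁻ (toEuclideanSchwartz b) (WithLp.toLp 2 w) *
      Complex.exp (((-2 * Real.pi * (w ⬝ᵥ x) : ℝ) : ℂ) * Complex.I))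
    (R := 2 * Real.pi) (by positivity)
  have hinv : b x = 𝓕 (𝓕⁻ (toEuclideanSchwartz b)) (WithLp.toLp 2 x) := by
    rw [FourierTransform.fourier_fourierInv_eq, toEuclideanSchwartz_apply]
  rw [hinv, SchwartzMap.fourier_coe, Real.fourier_eq']
  rw [Module.finrank_fin_fun] at h
  convert h using 2
  · ext k
    rw [moyalFourier_eq, smul_dotProduct, smul_eq_mul]
    congr 2
    push_cast
    have : (Real.pi : ℂ) ≠ 0 := by exact_mod_cast Real.pi_ne_zero
    field_simp
  · symm
    rw [← integral_comp_ofLp]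
    refine integral_congr_ae (.of_forall fun v => ?_)
    simp only [EuclideanSpace.inner_eq_star_dotProduct, star_trivial, smul_eq_mul]
    rw [mul_comm, dotProduct_comm]

lemma moyalD_eq {D : ℕ} (θ : Matrix (Fin D) (Fin D) ℝ) (a b : (Fin D → ℝ) → ℂ) (x : Fin D → ℝ) :
    moyalD D θ a b x = (1 / (2 * Real.pi) ^ D : ℝ) •
      ∫ k, a (x + (1 / 2 : ℝ) • θ.mulVec k) *
        (moyalFourier b k * Complex.exp (-(Complex.I * ((k ⬝ᵥ x : ℝ) : ℂ)))) := by
  unfold moyalD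
  congr 2
  ext k
  simp only [mul_assoc]
  rw [integral_const_mul]
  congr 1
  rw [moyalFourier, ← integral_mul_const]
  symm
  rw [← integral_add_left_eq_self _ x]
  refine integral_congr_ae (.of_forall fun y => ?_)
  change _ = _ * Complex.exp (Complex.I * ((k ⬝ᵥ y : ℝ) : ℂ))
  simp only [mul_assoc]
  rw [← Complex.exp_add, dotProduct_add]
  congr 2
  push_cast
  ring

/-- Absolute integrability, which justifies every use of Fubini below. -/
lemma integrable_moyal {D : ℕ} (θ : Matrix (Fin D) (Fin D) ℝ) (a b : SchwartzMap (Fin D → ℝ) ℂ) :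
    Integrable (Function.uncurry fun k x : Fin D → ℝ => a (x + (1 / 2 : ℝ) • θ.mulVec k) *
        (moyalFourier b k * Complex.exp (-(Complex.I * ((k ⬝ᵥ x : ℝ) : ℂ)))))
      (volume.prod volume) := by
  have hθc : Continuous fun k : Fin D → ℝ => θ.mulVec k := by fun_prop
  have hmp : MeasurePreserving
      (fun p : (Fin D → ℝ) × (Fin D → ℝ) => (p.1, p.2 + (1 / 2 : ℝ) • θ.mulVec p.1))
      (volume.prod volume) (volume.prod volume) :=
    (MeasurePreserving.id volume).skew_product
      (g := fun k x => x + (1 / 2 : ℝ) • θ.mulVec k)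
      (by
        apply Continuous.measurable
        simp only [Function.uncurry_def]
        fun_prop)
      (.of_forall fun k => (measurePreserving_add_right volume _).map_eq)
  have h1 := hmp.integrable_comp_of_integrable ((integrable_moyalFourier b).mul_prod a.integrable)
  have h2 := h1.mul_bdd (c := 1)
    (g := fun p => Complex.exp (-(Complex.I * ((p.1 ⬝ᵥ p.2 : ℝ) : ℂ))))
    (by
      apply Continuous.aestronglyMeasurable
      simp only [dotProduct]
      fun_prop)
    (.of_forall fun p => by simp [Complex.norm_exp])
  refine h2.congr (.of_forall fun p => ?_)
  simp only [Function.comp, Function.uncurry_def]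
  ring

lemma integral_moyalD {D : ℕ} (θ : Matrix (Fin D) (Fin D) ℝ) (a b : SchwartzMap (Fin D → ℝ) ℂ) :
    ∫ x, moyalD D θ (fun z => a z) (fun z => b z) x = (1 / (2 * Real.pi) ^ D : ℝ) •
      ∫ k, ∫ x, a (x + (1 / 2 : ℝ) • θ.mulVec k) *
        (moyalFourier b k * Complex.exp (-(Complex.I * ((k ⬝ᵥ x : ℝ) : ℂ)))) := by
  rw [integral_integral_swap (integrable_moyal θ a b), ← integral_smul]
  exact integral_congr_ae (.of_forall fun x => moyalD_eq θ _ _ x)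

lemma dotProduct_mulVec_self_eq_zero {D : ℕ} {θ : Matrix (Fin D) (Fin D) ℝ} (hθ : θᵀ = -θ)
    (k : Fin D → ℝ) : k ⬝ᵥ θ.mulVec k = 0 := by
  have h := dotProduct_transpose_mulVec θ k k
  rw [hθ, neg_mulVec, dotProduct_neg] at h
  linarith

/-- The integral of `a ⋆ b` does not depend on `θ`: translating `x` by `½θk` only produces the
phase `e^{-i k·θk/2} = 1`. -/
lemma integral_moyalD_eq_zero_matrix {D : ℕ} {θ : Matrix (Fin D) (Fin D) ℝ} (hθ : θᵀ = -θ)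
    (a b : SchwartzMap (Fin D → ℝ) ℂ) :
    ∫ x, moyalD D θ (fun z => a z) (fun z => b z) x
      = ∫ x, moyalD D 0 (fun z => a z) (fun z => b z) x := by
  rw [integral_moyalD, integral_moyalD]
  congr 2
  ext k
  symm
  rw [← integral_add_right_eq_self _ ((1 / 2 : ℝ) • θ.mulVec k)]
  refine integral_congr_ae (.of_forall fun x => ?_)
  simp [dotProduct_add, dotProduct_smul, dotProduct_mulVec_self_eq_zero hθ]

/-- Let `D` be a positive integer, `θ` a real antisymmetric `D×D` matrix, and `a, b`
Schwartz functions on `ℝ^D`. Then the Moyal star product is tracial: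
`∫ (a ⋆ b)(x) dx = ∫ a(x) b(x) dx`. -/
theorem moyal_tracial (D : ℕ) (hD : 0 < D) (θ : Matrix (Fin D) (Fin D) ℝ)
    (hθ : θᵀ = -θ) (a b : SchwartzMap (Fin D → ℝ) ℂ) :
    ∫ x : Fin D → ℝ, moyalD D θ (fun z => a z) (fun z => b z) x
      = ∫ x : Fin D → ℝ, a x * b x := by
  rw [integral_moyalD_eq_zero_matrix hθ]
  refine integral_congr_ae (.of_forall fun x => ?_)
  have hpi : ((2 * Real.pi) ^ D : ℝ) ≠ 0 := by positivity
  simp only [moyalD_eq, zero_mulVec, smul_zero, add_zero]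
  rw [integral_const_mul, integral_moyalFourier_mul_exp b x, mul_smul_comm, smul_smul,
    one_div_mul_cancel hpi, one_smul]
end
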